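/- arXiv:2007.06267 — 11 statements merged into one kernel-verified Lean document; each statement's English description precedes it below -/
import Mathlib

section
/- For any finite sets E (entities) and R (binary relations) and any truth assignment τ : R × E × E → Prop, there exists a BoxE configuration of dimension d = |E|·|R| — that is, maps base : E → ℝ^d and bump : E → ℝ^d, and for every r ∈ R corner vectors l_r^1, u_r^1, l_r^2, u_r^2 ∈ ℝ^d defining boxes B_r^p = {z ∈ ℝ^d : l_r^p ≤ z ≤ u_r^p componentwise} — such that for all r ∈ R and e1, e2 ∈ E: τ(r, e1, e2) holds if and only if base(e1) + bump(e2) ∈ B_r^1 and base(e2) + bump(e1) ∈ B_r^2. (Full expressiveness of BoxE over knowledge graphs.) -/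
/-!
The coordinates are indexed by pairs `(f, s)` of an entity and a relation. At `(f, s)` the base
embedding of `e` is the indicator of `e = f`, and the bump embedding of `e` is the indicator of
`¬ τ s f e`. Hence `base e₁ + bump e₂` takes values in `[0, 2]`, and equals `2` at `(f, s)` exactly
when `e₁ = f` and `τ s e₁ e₂` fails. The head box of `r` is `[0, 1]` on the coordinates `(f, r)` and
`[0, 2]` on the others, so it excludes exactly the false facts of `r`; the tail box is `[0, 2]`
everywhere and imposes no condition.
-/

/-- Membership of a point `z` in the axis-aligned box in `ℝ^d`
with lower corner `l` and upper corner `u` (componentwise inequalities). -/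
def inBox {d : ℕ} (l u z : Fin d → ℝ) : Prop := ∀ i, l i ≤ z i ∧ z i ≤ u i

/-- **Full expressiveness of BoxE over knowledge graphs.**
For any finite sets `E` (entities) and `R` (binary relations) and any truth
assignment `τ`, there is a BoxE configuration of dimension `|E|·|R|` — base and
bump embeddings, and for each relation two boxes given by corner vectors — such
that `τ r e₁ e₂` holds iff `base e₁ + bump e₂` lies in the head box of `r` and
`base e₂ + bump e₁` lies in the tail box of `r`. -/
theorem boxE_fully_expressive_KG
    (E R : Type*) [Fintype E] [Fintype R] (τ : R → E → E → Prop) :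
    ∃ (base bump : E → Fin (Fintype.card E * Fintype.card R) → ℝ)
      (l₁ u₁ l₂ u₂ : R → Fin (Fintype.card E * Fintype.card R) → ℝ),
      ∀ (r : R) (e₁ e₂ : E),
        τ r e₁ e₂ ↔
          (inBox (l₁ r) (u₁ r) (base e₁ + bump e₂) ∧
           inBox (l₂ r) (u₂ r) (base e₂ + bump e₁)) := by
  classical
  obtain ⟨φ⟩ : Nonempty (Fin (Fintype.card E * Fintype.card R) ≃ E × R) :=
    ⟨(Fintype.equivFinOfCardEq (Fintype.card_prod E R)).symm⟩
  refine ⟨fun e i => if e = (φ i).1 then 1 else 0,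
    fun e i => if τ (φ i).2 (φ i).1 e then 0 else 1,
    fun _ _ => 0, fun r i => if (φ i).2 = r then 1 else 2,
    fun _ _ => 0, fun _ _ => 2, fun r e₁ e₂ => ⟨fun h => ⟨fun i => ?_, fun i => ?_⟩, ?_⟩⟩
  · simp only [Pi.add_apply]
    by_cases h₁ : e₁ = (φ i).1
    · by_cases h₂ : (φ i).2 = r
      · subst h₁ h₂
        simp [h]
      · simp only [h₁, h₂, if_true, if_false]
        split_ifs <;> norm_num
    · simp only [h₁, if_false]
      split_ifs <;> norm_num
  · simp only [Pi.add_apply]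
    split_ifs <;> norm_num
  · rintro ⟨h, -⟩
    by_contra hτ
    -- The coordinate `(e₁, r)` witnesses a false fact: there the sum is `2`, the upper corner `1`.
    have := (h (φ.symm (e₁, r))).2
    norm_num [hτ] at this
end

section
/- Let d ≥ 1, let r ∈ ℝ^d, let ε ≥ 0, and let M_r = {(x, y) ∈ ℝ^d × ℝ^d : ‖x + r − y‖ ≤ ε} be the TransE decision region of r with margin ε (Euclidean norm). Then M_r is symmetric — i.e. (x, y) ∈ M_r implies (y, x) ∈ M_r for all x, y — if and only if r = 0. (TransE captures the symmetry rule r(x,y) ⇒ r(y,x) only for the zero translation.) -/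
/-!
The region depends only on `v = y - x`, through `‖r - v‖ ≤ ε`, so symmetry says that the closed
ball of radius `ε` about `r` is invariant under `v ↦ -v`. The point of this ball farthest from the
origin in the direction of `r` shows that this fails unless the centre `r` is the origin.
-/

/-- **TransE captures symmetry only for the zero translation.**
For `r ∈ ℝ^d` and margin `ε ≥ 0`, the TransE decision region
`M_r = {(x, y) : ‖x + r − y‖ ≤ ε}` is symmetric iff `r = 0`. -/
theorem transE_symmetry_iff_zero (d : ℕ) (hd : 1 ≤ d)
    (r : EuclideanSpace ℝ (Fin d)) (ε : ℝ) (hε : 0 ≤ ε) :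
    (∀ x y : EuclideanSpace ℝ (Fin d), ‖x + r - y‖ ≤ ε → ‖y + r - x‖ ≤ ε) ↔
      r = 0 := by
  constructor
  · intro h
    by_contra hr
    have hpos : 0 < ‖r‖ := norm_pos_iff.mpr hr
    have ht : 0 ≤ ε / ‖r‖ := div_nonneg hε hpos.le
    have hmul : ε / ‖r‖ * ‖r‖ = ε := div_mul_cancel₀ ε (ne_of_gt hpos)
    -- The pair `(0, r + (ε / ‖r‖) • r)` lies on the boundary of the region, at the far end in
    -- the direction of `r`; the swapped pair has residual norm `2 * ‖r‖ + ε > ε`.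
    have key := h 0 ((1 + ε / ‖r‖) • r) (by
      have e : 0 + r - (1 + ε / ‖r‖) • r = -((ε / ‖r‖) • r) := by module
      rw [e, norm_neg, norm_smul, Real.norm_of_nonneg ht, hmul])
    have e : (1 + ε / ‖r‖) • r + r - 0 = (2 + ε / ‖r‖) • r := by module
    rw [e, norm_smul, Real.norm_of_nonneg (by linarith), add_mul, hmul] at key
    linarith
  · rintro rfl x y hxy
    rw [add_zero] at hxy ⊢
    rwa [norm_sub_rev]
end

section
/- Let d ≥ 1, let r ∈ ℝ^d, let ε > 0, and let M_r = {(x, y) ∈ ℝ^d × ℝ^d : ‖x + r − y‖ < ε} be the open TransE decision region of r with margin ε (Euclidean norm). Then r is anti-symmetric — i.e. for all x, y, (x, y) ∈ M_r implies (y, x) ∉ M_r — if and only if ‖r‖ ≥ ε. -/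
/-- **TransE anti-symmetry.** For `r ∈ ℝ^d` and strict margin `ε > 0`, with open
decision region `M_r = {(x, y) : ‖x + r − y‖ < ε}`, the relation `r` is
anti-symmetric (i.e. `(x, y) ∈ M_r` implies `(y, x) ∉ M_r`) iff `‖r‖ ≥ ε`. -/
theorem transE_antisymmetry_iff (d : ℕ) (hd : 1 ≤ d)
    (r : EuclideanSpace ℝ (Fin d)) (ε : ℝ) (hε : 0 < ε) :
    (∀ x y : EuclideanSpace ℝ (Fin d), ‖x + r - y‖ < ε → ¬ ‖y + r - x‖ < ε) ↔
      ε ≤ ‖r‖ := by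
  constructor
  · intro h
    by_contra! hr
    -- If `‖r‖ < ε`, the diagonal pair `(0, 0)` lies in the region and is its own reverse.
    exact h 0 0 (by simpa using hr) (by simpa using hr)
  · intro hr x y hxy hyx
    -- The two displacements sum to `2r`, so one of them has norm at least `‖r‖`.
    have hsum : (x + r - y) + (y + r - x) = (2 : ℝ) • r := by
      rw [two_smul]
      abel
    have htri := norm_add_le (x + r - y) (y + r - x)
    rw [hsum, norm_smul, Real.norm_ofNat] at htri
    linarith
end

section
/- Let d ≥ 1, let r1, r2 ∈ ℝ^d, let ε ≥ 0, and for each relation vector r let M_r = {(x, y) ∈ ℝ^d × ℝ^d : ‖x + r − y‖ ≤ ε} (Euclidean norm). If M_{r1} ⊆ M_{r2}, then r1 = r2. (TransE cannot capture a hierarchy rule r1(x,y) ⇒ r2(x,y) between distinct relations: region containment forces relation equality.) -/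
/-- **TransE cannot capture hierarchies between distinct relations.**
For `r₁, r₂ ∈ ℝ^d` and margin `ε ≥ 0`, if the decision region
`M_{r₁} = {(x, y) : ‖x + r₁ − y‖ ≤ ε}` is contained in `M_{r₂}`, then
`r₁ = r₂`. -/
theorem transE_hierarchy_forces_equality (d : ℕ) (hd : 1 ≤ d)
    (r₁ r₂ : EuclideanSpace ℝ (Fin d)) (ε : ℝ) (hε : 0 ≤ ε)
    (h : ∀ x y : EuclideanSpace ℝ (Fin d), ‖x + r₁ - y‖ ≤ ε → ‖x + r₂ - y‖ ≤ ε) :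
    r₁ = r₂ := by
  by_contra hne
  have hv : 0 < ‖r₂ - r₁‖ := norm_pos_iff.mpr (sub_ne_zero.mpr (Ne.symm hne))
  -- `x + r₁ - y` is the vector of length `ε` pointing along `r₂ - r₁`,
  -- so `x + r₂ - y` has length `ε + ‖r₂ - r₁‖`.
  have key := h ((ε / ‖r₂ - r₁‖) • (r₂ - r₁) - r₁) 0
  have h₁ : (ε / ‖r₂ - r₁‖) • (r₂ - r₁) - r₁ + r₁ - 0
      = (ε / ‖r₂ - r₁‖) • (r₂ - r₁) := by abel
  have h₂ : (ε / ‖r₂ - r₁‖) • (r₂ - r₁) - r₁ + r₂ - 0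
      = (ε / ‖r₂ - r₁‖ + 1) • (r₂ - r₁) := by
    rw [add_smul, one_smul]; abel
  have hc : 0 ≤ ε / ‖r₂ - r₁‖ := div_nonneg hε hv.le
  rw [h₁, h₂, norm_smul, norm_smul, Real.norm_of_nonneg hc,
    Real.norm_of_nonneg (by linarith), add_mul, div_mul_cancel₀ _ hv.ne'] at key
  linarith [key le_rfl]
end

section
/- Let d ≥ 1, let r1, r2 ∈ ℝ^d, let ε ≥ 0, and for each relation vector r let M_r = {(x, y) ∈ ℝ^d × ℝ^d : ‖x + r − y‖ ≤ ε} (Euclidean norm). Then the inversion rule r1(x, y) ⇔ r2(y, x) holds — i.e. for all x, y ∈ ℝ^d, (x, y) ∈ M_{r1} if and only if (y, x) ∈ M_{r2} — if and only if r1 = −r2. -/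
/-!
Put `s = r₁ + r₂` and `z = x + r₁ - y`, so that `y + r₂ - x = s - z`. The inversion rule then says
that the closed balls of radius `ε` around `0` and around `s` coincide. If `s ≠ 0` they do not: the
point of the first ball lying opposite to `s`, at distance `ε` from `0`, is at distance `‖s‖ + ε`
from `s`.
-/

/-- **TransE inversion.** For `r₁, r₂ ∈ ℝ^d` and margin `ε ≥ 0`, the inversion
rule `r₁(x, y) ⇔ r₂(y, x)` holds (i.e. `(x, y) ∈ M_{r₁} ↔ (y, x) ∈ M_{r₂}` for
all `x, y`) iff `r₁ = −r₂`. -/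
theorem transE_inversion_iff (d : ℕ) (hd : 1 ≤ d)
    (r₁ r₂ : EuclideanSpace ℝ (Fin d)) (ε : ℝ) (hε : 0 ≤ ε) :
    (∀ x y : EuclideanSpace ℝ (Fin d), ‖x + r₁ - y‖ ≤ ε ↔ ‖y + r₂ - x‖ ≤ ε) ↔
      r₁ = -r₂ := by
  constructor
  · intro h
    by_contra hne
    have hs : r₁ + r₂ ≠ 0 := fun h0 => hne (eq_neg_of_add_eq_zero_left h0)
    have hpos : 0 < ‖r₁ + r₂‖ := norm_pos_iff.mpr hs
    -- This `x`, with `y = 0`, makes `x + r₁ - y` the point `-(ε / ‖s‖) • s`, where `s = r₁ + r₂`.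
    have key := (h (-(ε / ‖r₁ + r₂‖) • (r₁ + r₂) - r₁) 0).1 (by
      rw [sub_add_cancel, sub_zero, norm_smul, norm_neg, Real.norm_of_nonneg (by positivity),
        div_mul_cancel₀ _ hpos.ne'])
    have e : 0 + r₂ - (-(ε / ‖r₁ + r₂‖) • (r₁ + r₂) - r₁)
        = (1 + ε / ‖r₁ + r₂‖) • (r₁ + r₂) := by
      module
    rw [e, norm_smul, Real.norm_of_nonneg (by positivity), add_mul, one_mul,
      div_mul_cancel₀ _ hpos.ne'] at key
    linarith
  · rintro rfl x y
    rw [← norm_neg (y + r₂ - x), show -(y + r₂ - x) = x + -r₂ - y by abel]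
end

section
/- Let d ≥ 1, let r1, r2 ∈ ℝ^d, let ε > 0, and for each relation vector r let M_r = {(x, y) ∈ ℝ^d × ℝ^d : ‖x + r − y‖ < ε} (Euclidean norm). Then the mutual exclusion rule r1(x, y) ∧ r2(x, y) ⇒ ⊥ holds — i.e. M_{r1} ∩ M_{r2} = ∅ — if and only if ‖r1 − r2‖ ≥ 2ε. -/
/-!
A pair `(x, y)` lies in both decision regions iff `y - x` lies in both open balls of radius `ε`
around `r₁` and `r₂`. If the balls meet, the triangle inequality gives `‖r₁ - r₂‖ < 2 * ε`;
conversely, if `‖r₁ - r₂‖ < 2 * ε`, the midpoint of `r₁` and `r₂` lies in both.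
-/

/-- **TransE mutual exclusion.** For `r₁, r₂ ∈ ℝ^d` and strict margin `ε > 0`,
with open decision regions `M_r = {(x, y) : ‖x + r − y‖ < ε}`, the mutual
exclusion rule `r₁(x, y) ∧ r₂(x, y) ⇒ ⊥` holds (i.e. `M_{r₁} ∩ M_{r₂} = ∅`)
iff `‖r₁ − r₂‖ ≥ 2ε`. -/
theorem transE_mutual_exclusion_iff (d : ℕ) (hd : 1 ≤ d)
    (r₁ r₂ : EuclideanSpace ℝ (Fin d)) (ε : ℝ) (hε : 0 < ε) :
    (∀ x y : EuclideanSpace ℝ (Fin d),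
        ¬ (‖x + r₁ - y‖ < ε ∧ ‖x + r₂ - y‖ < ε)) ↔
      2 * ε ≤ ‖r₁ - r₂‖ := by
  constructor
  · intro h
    by_contra! hlt
    -- Taking `y` to be the midpoint makes both residuals equal to `±(r₁ - r₂) / 2`.
    apply h 0 ((1 / 2 : ℝ) • (r₁ + r₂))
    have e₁ : 0 + r₁ - (1 / 2 : ℝ) • (r₁ + r₂) = (1 / 2 : ℝ) • (r₁ - r₂) := by module
    have e₂ : 0 + r₂ - (1 / 2 : ℝ) • (r₁ + r₂) = (-(1 / 2) : ℝ) • (r₁ - r₂) := by module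
    rw [e₁, e₂, norm_smul, norm_smul, norm_neg, Real.norm_of_nonneg (by norm_num)]
    constructor <;> linarith
  · rintro h x y ⟨h₁, h₂⟩
    have e : r₁ - r₂ = (x + r₁ - y) - (x + r₂ - y) := by abel
    have := norm_sub_le (x + r₁ - y) (x + r₂ - y)
    rw [← e] at this
    linarith
end

section
/- Let d ≥ 1, let r1, r2, r3 ∈ ℝ^d with r3 = (r1 + r2)/2, let ε ≥ 0, and for each relation vector r let M_r = {(x, y) ∈ ℝ^d × ℝ^d : ‖x + r − y‖ ≤ ε} (Euclidean norm). Then the intersection rule r1(x, y) ∧ r2(x, y) ⇒ r3(x, y) holds: M_{r1} ∩ M_{r2} ⊆ M_{r3}. (TransE captures a single intersection rule by placing r3 at the midpoint of r1 and r2.) -/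
/-- **TransE captures a single intersection rule via the midpoint.**
For `r₁, r₂ ∈ ℝ^d`, `r₃ = (r₁ + r₂)/2`, and margin `ε ≥ 0`, the intersection
rule `r₁(x, y) ∧ r₂(x, y) ⇒ r₃(x, y)` holds: `M_{r₁} ∩ M_{r₂} ⊆ M_{r₃}`. -/
theorem transE_intersection_midpoint (d : ℕ) (hd : 1 ≤ d)
    (r₁ r₂ r₃ : EuclideanSpace ℝ (Fin d)) (hr₃ : r₃ = (2 : ℝ)⁻¹ • (r₁ + r₂))
    (ε : ℝ) (hε : 0 ≤ ε) :
    ∀ x y : EuclideanSpace ℝ (Fin d),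
      ‖x + r₁ - y‖ ≤ ε → ‖x + r₂ - y‖ ≤ ε → ‖x + r₃ - y‖ ≤ ε := by
  intro x y h₁ h₂
  -- The third residual is the midpoint of the first two, so the triangle inequality bounds it.
  have key : x + r₃ - y = (2 : ℝ)⁻¹ • ((x + r₁ - y) + (x + r₂ - y)) := by
    rw [hr₃]
    module
  rw [key, norm_smul, Real.norm_of_nonneg (by norm_num)]
  linarith [norm_add_le (x + r₁ - y) (x + r₂ - y)]
end

section
/- Let d ≥ 1, let ε > 0, and let r1, r2 ∈ ℂ^d be RotatE relation vectors with all coordinates of modulus 1; for a relation vector r let M_r = {(x, y) ∈ ℂ^d × ℂ^d : ‖x ∘ r − y‖ ≤ ε}, where ∘ is componentwise multiplication and ‖·‖ is the Euclidean norm on ℂ^d. If M_{r1} ⊆ M_{r2}, then r1 = r2. (RotatE cannot capture a hierarchy rule r1(x,y) ⇒ r2(x,y) between distinct relations: margin-region containment forces relation equality.) -/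
/-!
The point `(x, x ∘ r₁)` lies in `M_{r₁}` for every `x`, so containment gives
`‖x ∘ r₂ - x ∘ r₁‖ ≤ ε` for all `x`. The left side is homogeneous in `x`, so if `r₁` and `r₂`
differ in coordinate `i`, scaling a constant vector `x` makes that coordinate alone exceed `ε`.
-/

/-- The Euclidean norm on `ℂ^d`. -/
noncomputable def euclNormC {d : ℕ} (x : Fin d → ℂ) : ℝ :=
  Real.sqrt (∑ i, ‖x i‖ ^ 2)

/-- **RotatE cannot capture hierarchies between distinct relations.**
For RotatE relation vectors `r₁, r₂ ∈ ℂ^d` with all coordinates of modulus 1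
and margin `ε > 0`, if the decision region
`M_{r₁} = {(x, y) : ‖x ∘ r₁ − y‖ ≤ ε}` is contained in `M_{r₂}`, then
`r₁ = r₂`. -/
theorem rotatE_hierarchy_forces_equality (d : ℕ) (hd : 1 ≤ d) (ε : ℝ) (hε : 0 < ε)
    (r₁ r₂ : Fin d → ℂ) (h₁ : ∀ i, ‖r₁ i‖ = 1) (h₂ : ∀ i, ‖r₂ i‖ = 1)
    (h : ∀ x y : Fin d → ℂ, euclNormC (x * r₁ - y) ≤ ε → euclNormC (x * r₂ - y) ≤ ε) :
    r₁ = r₂ := by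
  funext i
  by_contra hne
  have hpos : 0 < ‖r₂ i - r₁ i‖ := norm_pos_iff.mpr (sub_ne_zero.mpr (Ne.symm hne))
  -- `t` is chosen so that the `i`-th coordinate of `x ∘ r₂ - x ∘ r₁` has modulus `2ε`
  -- when `x` is the constant vector `t`.
  set t : ℝ := 2 * ε / ‖r₂ i - r₁ i‖ with ht
  have htpos : 0 < t := by positivity
  have key := h (fun _ => (t : ℂ)) ((fun _ => (t : ℂ)) * r₁) (by simp [euclNormC, hε.le])
  have hcoord : ‖(t : ℂ) * r₂ i - t * r₁ i‖ = 2 * ε := by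
    rw [← mul_sub, norm_mul, Complex.norm_real, Real.norm_of_nonneg htpos.le, ht,
      div_mul_cancel₀ _ hpos.ne']
  simp only [euclNormC, Real.sqrt_le_left hε.le, Pi.sub_apply, Pi.mul_apply] at key
  have hle := (Finset.single_le_sum (f := fun j => ‖(t : ℂ) * r₂ j - t * r₁ j‖ ^ 2)
    (fun j _ => sq_nonneg _) (Finset.mem_univ i)).trans key
  simp only [hcoord] at hle
  nlinarith [sq_pos_of_pos hε]
end

section
/- Let d ≥ 1 and let r ∈ ℂ^d be a ComplEx relation vector, with score s_r(x, y) = Re(Σ_{i=1}^d r_i · x_i · conj(y_i)) for entity vectors x, y ∈ ℂ^d. Then the score is symmetric — s_r(x, y) = s_r(y, x) for all x, y ∈ ℂ^d — if and only if every coordinate r_i is real (Im(r_i) = 0 for all i). (ComplEx captures symmetry exactly for real-only relation embeddings.) -/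
/-- The ComplEx score of a fact `r(x, y)`:
`Re(∑ i, r i · x i · conj (y i))`. -/
noncomputable def complExScore {d : ℕ} (r x y : Fin d → ℂ) : ℝ :=
  (∑ i, r i * x i * (starRingEnd ℂ) (y i)).re

/-- **ComplEx captures symmetry exactly for real-only relation embeddings.**
The score `s_r` is symmetric (`s_r(x, y) = s_r(y, x)` for all `x, y`) iff every
coordinate of `r` has zero imaginary part. -/
theorem complEx_symmetry_iff (d : ℕ) (hd : 1 ≤ d) (r : Fin d → ℂ) :
    (∀ x y : Fin d → ℂ, complExScore r x y = complExScore r y x) ↔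
      (∀ i, (r i).im = 0) := by
  constructor
  · intro h j
    -- At `x = I • e_j`, `y = e_j` the two scores are `-Im (r j)` and `Im (r j)`.
    have hj := h (Pi.single j Complex.I) (Pi.single j 1)
    simp only [complExScore] at hj
    rw [Finset.sum_eq_single j (by intro b _ hb; simp [hb]) (by simp),
      Finset.sum_eq_single j (by intro b _ hb; simp [hb]) (by simp)] at hj
    simp at hj
    linarith
  · intro h x y
    simp only [complExScore, Complex.re_sum]
    refine Finset.sum_congr rfl fun i _ => ?_
    simp [h i]
    ring
end

section
/- Let d ≥ 1 and let r ∈ ℂ^d be a ComplEx relation vector, with score s_r(x, y) = Re(Σ_{i=1}^d r_i · x_i · conj(y_i)) for entity vectors x, y ∈ ℂ^d. Then the score is antisymmetric — s_r(x, y) = −s_r(y, x) for all x, y ∈ ℂ^d — if and only if every coordinate r_i is purely imaginary (Re(r_i) = 0 for all i). (ComplEx captures anti-symmetry exactly for imaginary-only relation embeddings.) -/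
/-- **ComplEx captures anti-symmetry exactly for imaginary-only relation
embeddings.** The score `s_r` is antisymmetric (`s_r(x, y) = −s_r(y, x)` for
all `x, y`) iff every coordinate of `r` has zero real part. -/
theorem complEx_antisymmetry_iff (d : ℕ) (hd : 1 ≤ d) (r : Fin d → ℂ) :
    (∀ x y : Fin d → ℂ, complExScore r x y = -complExScore r y x) ↔
      (∀ i, (r i).re = 0) := by
  constructor
  · intro h i
    -- On `x = y = eᵢ`, antisymmetry reads `Re (r i) = -Re (r i)`.
    have h1 := h (Pi.single i 1) (Pi.single i 1)
    have h2 : complExScore r (Pi.single i 1) (Pi.single i 1) = (r i).re := by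
      simp [complExScore, Pi.single_apply]
    rw [h2] at h1
    linarith
  · intro h x y
    simp only [complExScore, Complex.re_sum, ← Finset.sum_neg_distrib]
    refine Finset.sum_congr rfl fun i _ => ?_
    -- With `Re (r i) = 0`, the term is `-Im (r i) * Im (x i * conj (y i))`,
    -- which changes sign when `x` and `y` are exchanged.
    simp only [Complex.mul_re, Complex.mul_im, Complex.conj_re, Complex.conj_im, h i]
    ring
end

section
/- Let d ≥ 1, let ε > 0, and let a, b ∈ ℝ^d with a ≠ 0; write ⟨·,·⟩ for the standard inner product on ℝ^d and let A_v = {x ∈ ℝ^d : ⟨v, x⟩ ≥ ε} denote the linear-score decision region of a vector v with margin ε. Then A_a ⊆ A_b if and only if there exists a scalar λ ≥ 1 with b = λ·a. (In bilinear models such as TuckER, where the score of a fact is linear in the tail-entity embedding, a hierarchy rule r1(x,y) ⇒ r2(x,y) can hold only when the corresponding score vectors are positively colinear.) -/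
/-!
Decompose `b = l • a + w` with `w` orthogonal to `a`. The points `(ε / ⟪a, a⟫) • a - t • w` have
score exactly `ε` against `a` and `ε * l - t * ⟪w, w⟫` against `b`. Containment makes the latter
at least `ε` for every real `t`: `t = 0` gives `1 ≤ l`, and unboundedness in `t` forces `w = 0`.
-/

open scoped RealInnerProductSpace

/-- **Halfspace containment in bilinear models forces positive colinearity.**
For `ε > 0` and `a, b ∈ ℝ^d` with `a ≠ 0`, the decision region
`A_a = {x : ⟪a, x⟫ ≥ ε}` is contained in `A_b` iff `b = λ • a` for some
`λ ≥ 1`. -/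
theorem bilinear_hierarchy_iff_colinear (d : ℕ) (hd : 1 ≤ d) (ε : ℝ) (hε : 0 < ε)
    (a b : EuclideanSpace ℝ (Fin d)) (ha : a ≠ 0) :
    ({x : EuclideanSpace ℝ (Fin d) | ε ≤ ⟪a, x⟫} ⊆ {x | ε ≤ ⟪b, x⟫}) ↔
      ∃ lam : ℝ, 1 ≤ lam ∧ b = lam • a := by
  constructor
  · intro h
    have hN : (0 : ℝ) < ⟪a, a⟫ := real_inner_self_pos.2 ha
    -- `l • a` is the orthogonal projection of `b` onto the line `ℝ a`, and `w` the remainder.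
    obtain ⟨l, hl⟩ : ∃ l : ℝ, l * ⟪a, a⟫ = ⟪b, a⟫ := ⟨⟪b, a⟫ / ⟪a, a⟫, by field_simp⟩
    obtain ⟨w, hw⟩ : ∃ w, w = b - l • a := ⟨_, rfl⟩
    have haw : ⟪a, w⟫ = 0 := by
      rw [hw, inner_sub_right, real_inner_smul_right, hl, real_inner_comm, sub_self]
    have hbw : ⟪b, w⟫ = ⟪w, w⟫ := by
      have hb : b = w + l • a := by rw [hw]; abel
      conv_lhs => rw [hb]
      rw [inner_add_left, real_inner_smul_left, haw, mul_zero, add_zero]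
    -- The points `(ε / ⟪a, a⟫) • a - t • w` all lie on the boundary of the region of `a`.
    have key : ∀ t : ℝ, ε ≤ ε * l - t * ⟪w, w⟫ := by
      intro t
      have hx := @h ((ε / ⟪a, a⟫) • a - t • w) (by
        simp only [Set.mem_setOf_eq, inner_sub_right, real_inner_smul_right, haw]
        rw [div_mul_cancel₀ _ hN.ne']
        simp)
      simp only [Set.mem_setOf_eq, inner_sub_right, real_inner_smul_right, hbw, ← hl] at hx
      have he : ε / ⟪a, a⟫ * (l * ⟪a, a⟫) = ε * l := by field_simp
      rwa [he] at hx
    refine ⟨l, ?_, ?_⟩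
    · have h0 := key 0
      rw [zero_mul, sub_zero] at h0
      exact le_of_mul_le_mul_left (by simpa using h0) hε
    · by_contra hne
      have hw0 : w ≠ 0 := by
        rw [hw]
        exact sub_ne_zero.2 hne
      have hW : (0 : ℝ) < ⟪w, w⟫ := real_inner_self_pos.2 hw0
      -- This `t` makes the score against `b` vanish.
      have h1 := key (ε * l / ⟪w, w⟫)
      rw [div_mul_cancel₀ _ hW.ne', sub_self] at h1
      linarith
  · rintro ⟨l, hl, rfl⟩ x hx
    simp only [Set.mem_setOf_eq, real_inner_smul_left] at hx ⊢
    nlinarith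
end
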